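/- Let d ≥ 2, let μ be a compactly supported finite positive Borel measure on GL_d(ℝ), and let α > 0. Then k_α(μ) ≤ sup_{v ∈ ℝ^d, ‖v‖ = 1} ∫ (N_2(g)/‖gv‖²)^α dμ(g), where N_2(g) := sup{ √(‖gp‖²‖gq‖² − ⟨gp,gq⟩²) : p, q orthonormal in ℝ^d } is the product s_1(g)s_2(g) of the two largest singular values of g. -/

import Mathlib

open MeasureTheory Filter
open scoped LinearAlgebra.Projectivization

noncomputable section

abbrev GLd (d : ℕ) := GL (Fin d) ℝ
abbrev Ed (d : ℕ) := EuclideanSpace ℝ (Fin d)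
abbrev Pd (d : ℕ) := ℙ ℝ (Ed d)

variable {d : ℕ}

instance : MeasurableSpace (GLd d) := borel _
instance : BorelSpace (GLd d) := ⟨rfl⟩

instance : TopologicalSpace (Pd d) :=
  (instTopologicalSpaceQuotient : TopologicalSpace (Quotient (projectivizationSetoid ℝ (Ed d))))
instance : MeasurableSpace (Pd d) := borel _
instance : BorelSpace (Pd d) := ⟨rfl⟩

/-- The continuous linear map on Euclidean space induced by `g ∈ GL_d(ℝ)`. -/
def glCLM (g : GLd d) : Ed d →L[ℝ] Ed d :=
  Matrix.toEuclideanCLM (𝕜 := ℝ) (g : Matrix (Fin d) (Fin d) ℝ)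

/-- The operator norm of `g ∈ GL_d(ℝ)`. -/
def gnorm (g : GLd d) : ℝ := ‖glCLM g‖

lemma glCLM_leftInv (g : GLd d) (v : Ed d) : glCLM g⁻¹ (glCLM g v) = v := by
  have h : glCLM (d := d) g⁻¹ * glCLM g = 1 := by
    rw [glCLM, glCLM, ← map_mul]
    norm_cast
    rw [inv_mul_cancel g]
    exact map_one _
  calc glCLM g⁻¹ (glCLM g v) = (glCLM g⁻¹ * glCLM g) v := rfl
    _ = v := by rw [h]; rfl

lemma glLinear_injective (g : GLd d) : Function.Injective (glCLM g).toLinearMap :=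
  Function.LeftInverse.injective (g := (glCLM g⁻¹)) (fun v => glCLM_leftInv g v)

/-- The projective action of `g ∈ GL_d(ℝ)` on `ℙ(ℝ^d)`. -/
def pact (g : GLd d) : Pd d → Pd d :=
  Projectivization.map (glCLM g).toLinearMap (glLinear_injective g)

/-- The projective distance `δ` on `ℙ(ℝ^d)`, computed on representatives. -/
def pdelta (x y : Pd d) : ℝ :=
  Real.sqrt (‖x.rep‖ ^ 2 * ‖y.rep‖ ^ 2 - (inner ℝ x.rep y.rep : ℝ) ^ 2) /
    (‖x.rep‖ * ‖y.rep‖)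

/-- Convolution of two measures on `GL_d(ℝ)`. -/
def mconv (μ ν : Measure (GLd d)) : Measure (GLd d) :=
  (μ.prod ν).map (fun p => p.1 * p.2)

/-- `n`-fold convolution power of a measure on `GL_d(ℝ)`. -/
def mconvN (μ : Measure (GLd d)) : ℕ → Measure (GLd d)
  | 0 => Measure.dirac 1
  | n + 1 => if n = 0 then μ else mconv (mconvN μ n) μ

/-- The top Lyapunov exponent of a (compactly supported) measure on `GL_d(ℝ)`. -/
def L1 (μ : Measure (GLd d)) : ℝ :=
  limUnder atTop (fun n : ℕ => (n : ℝ)⁻¹ * ∫ g, Real.log (gnorm g) ∂(mconvN μ n))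

/-- `N₂ g = s₁(g)s₂(g)`, the product of the two largest singular values. -/
def N2 (g : GLd d) : ℝ :=
  sSup { x | ∃ p q : Ed d, ‖p‖ = 1 ∧ ‖q‖ = 1 ∧ (inner ℝ p q : ℝ) = 0 ∧
    x = Real.sqrt (‖glCLM g p‖ ^ 2 * ‖glCLM g q‖ ^ 2 -
      (inner ℝ (glCLM g p) (glCLM g q) : ℝ) ^ 2) }

/-- `L₁(μ) + L₂(μ)`. -/
def L12 (μ : Measure (GLd d)) : ℝ :=
  limUnder atTop (fun n : ℕ => (n : ℝ)⁻¹ * ∫ g, Real.log (N2 g) ∂(mconvN μ n))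

/-- The second Lyapunov exponent. -/
def L2 (μ : Measure (GLd d)) : ℝ := L12 μ - L1 μ

/-- The top Lyapunov exponent of the restriction of `μ` to an (invariant) subspace `V`. -/
def L1rest (μ : Measure (GLd d)) (V : Submodule ℝ (Ed d)) : ℝ :=
  limUnder atTop (fun n : ℕ => (n : ℝ)⁻¹ *
    ∫ g, Real.log ‖LinearMap.toContinuousLinearMap ((glCLM g).toLinearMap.domRestrict V)‖
      ∂(mconvN μ n))

/-- Quasi-irreducibility of a measure on `GL_d(ℝ)`. -/
def QuasiIrreducible (μ : Measure (GLd d)) : Prop :=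
  ¬ ∃ V : Submodule ℝ (Ed d), V ≠ ⊥ ∧ V ≠ ⊤ ∧
    (∀ᵐ g ∂μ, V.map (glCLM g).toLinearMap = V) ∧ L1rest μ V < L1 μ

/-- Irreducibility of a measure on `GL_d(ℝ)`. -/
def Irred (μ : Measure (GLd d)) : Prop :=
  ¬ ∃ V : Submodule ℝ (Ed d), V ≠ ⊥ ∧ V ≠ ⊤ ∧
    (∀ᵐ g ∂μ, V.map (glCLM g).toLinearMap = V)

/-- The Markov operator associated with a measure on `GL_d(ℝ)`. -/
def Qop (μ : Measure (GLd d)) (φ : Pd d → ℝ) : Pd d → ℝ :=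
  fun v => ∫ g, φ (pact g v) ∂μ

/-- The average `α`-Hölder constant of a measure on `GL_d(ℝ)`. -/
def kalpha (α : ℝ) (μ : Measure (GLd d)) : ℝ :=
  sSup { x | ∃ v₁ v₂ : Pd d, v₁ ≠ v₂ ∧
    x = ∫ g, (pdelta (pact g v₁) (pact g v₂) / pdelta v₁ v₂) ^ α ∂μ }

/-- The `α`-Hölder seminorm of an observable on `ℙ(ℝ^d)`. -/
def valpha (α : ℝ) (φ : Pd d → ℝ) : ℝ :=
  sSup { x | ∃ v₁ v₂ : Pd d, v₁ ≠ v₂ ∧ x = |φ v₁ - φ v₂| / pdelta v₁ v₂ ^ α }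

/-- `φ` is `α`-Hölder: `v_α(φ) < ∞`. -/
def IsHolder (α : ℝ) (φ : Pd d → ℝ) : Prop :=
  BddAbove { x | ∃ v₁ v₂ : Pd d, v₁ ≠ v₂ ∧ x = |φ v₁ - φ v₂| / pdelta v₁ v₂ ^ α }

/-- The total variation distance between two finite measures. -/
def tvDist (μ ν : Measure (GLd d)) [IsFiniteMeasure μ] [IsFiniteMeasure ν] : ℝ :=
  ((μ.toSignedMeasure - ν.toSignedMeasure).totalVariation Set.univ).toReal

/-- A measure is compactly supported. -/
def CompactlySupported (μ : Measure (GLd d)) : Prop :=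
  ∃ K : Set (GLd d), IsCompact K ∧ μ Kᶜ = 0

/-- `S` is the (topological) support of `μ`. -/
def IsSupport (μ : Measure (GLd d)) (S : Set (GLd d)) : Prop :=
  μ Sᶜ = 0 ∧ ∀ x ∈ S, ∀ U : Set (GLd d), IsOpen U → x ∈ U → 0 < μ U

/-- A measure `η` on `ℙ(ℝ^d)` is `μ`-stationary. -/
def Stationary (μ : Measure (GLd d)) (η : Measure (Pd d)) : Prop :=
  ∀ φ : Pd d → ℝ, Continuous φ → (∃ C, ∀ v, |φ v| ≤ C) →
    ∫ v, φ v ∂η = ∫ g, ∫ v, φ (pact g v) ∂η ∂μ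


/-- Gram determinant. -/
def gram2 (v w : Ed d) : ℝ := ‖v‖ ^ 2 * ‖w‖ ^ 2 - (inner ℝ v w : ℝ) ^ 2

lemma gram2_smul (a b : ℝ) (v w : Ed d) :
    gram2 (a • v) (b • w) = (a * b) ^ 2 * gram2 v w := by
  simp only [gram2, norm_smul, inner_smul_left, inner_smul_right, mul_pow, Real.norm_eq_abs,
    sq_abs, conj_trivial]
  ring

lemma gram2_add (c : ℝ) (v w : Ed d) : gram2 v (w + c • v) = gram2 v w := by
  simp only [gram2, ← real_inner_self_eq_norm_sq, inner_add_left, inner_add_right,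
    inner_smul_left, inner_smul_right, conj_trivial, real_inner_comm v w]
  ring

lemma gram2_le (v w : Ed d) : gram2 v w ≤ (‖v‖ * ‖w‖) ^ 2 := by
  rw [gram2, mul_pow]
  nlinarith [sq_nonneg (inner ℝ v w : ℝ)]

lemma sqrt_gram2_smul (a b : ℝ) (v w : Ed d) :
    Real.sqrt (gram2 (a • v) (b • w)) = |a| * |b| * Real.sqrt (gram2 v w) := by
  rw [gram2_smul, Real.sqrt_mul (sq_nonneg _), Real.sqrt_sq_eq_abs, abs_mul]

lemma N2_bdd (g : GLd d) : ∀ x ∈ { x | ∃ p q : Ed d, ‖p‖ = 1 ∧ ‖q‖ = 1 ∧ (inner ℝ p q : ℝ) = 0 ∧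
    x = Real.sqrt (‖glCLM g p‖ ^ 2 * ‖glCLM g q‖ ^ 2 -
      (inner ℝ (glCLM g p) (glCLM g q) : ℝ) ^ 2) }, x ≤ gnorm g ^ 2 := by
  rintro x ⟨p, q, hp, hq, -, rfl⟩
  have h1 : ‖glCLM g p‖ ≤ gnorm g := by simpa [hp, gnorm] using (glCLM g).le_opNorm p
  have h2 : ‖glCLM g q‖ ≤ gnorm g := by simpa [hq, gnorm] using (glCLM g).le_opNorm q
  refine (Real.sqrt_le_sqrt (gram2_le (glCLM g p) (glCLM g q))).trans ?_
  rw [Real.sqrt_sq (by positivity), sq]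
  exact mul_le_mul h1 h2 (norm_nonneg _) (norm_nonneg _)

lemma N2_nonneg (g : GLd d) : 0 ≤ N2 g := by
  apply Real.sSup_nonneg
  rintro x ⟨p, q, -, -, -, rfl⟩
  exact Real.sqrt_nonneg _

lemma N2_le (g : GLd d) : N2 g ≤ gnorm g ^ 2 :=
  Real.sSup_le (N2_bdd g) (sq_nonneg _)

lemma gram2_map_le (g : GLd d) (v w : Ed d) :
    Real.sqrt (gram2 (glCLM g v) (glCLM g w)) ≤ N2 g * Real.sqrt (gram2 v w) := by
  by_cases hv : v = 0
  · subst hv; simp [gram2]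
  have hv' : ‖v‖ ≠ 0 := norm_ne_zero_iff.mpr hv
  set c : ℝ := inner ℝ v w / ‖v‖ ^ 2 with hc
  set r : Ed d := w + (-c) • v with hr
  have hvr : inner ℝ v r = 0 := by
    rw [hr, inner_add_right, inner_smul_right, real_inner_self_eq_norm_sq, hc]
    field_simp
    ring
  have e1 : gram2 v w = gram2 v r := (gram2_add (-c) v w).symm
  have e2 : gram2 (glCLM g v) (glCLM g w) = gram2 (glCLM g v) (glCLM g r) := by
    rw [hr, map_add, map_smul, gram2_add]
  rw [e1, e2]
  by_cases hr0 : r = 0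
  · rw [hr0]; simp [gram2]
  have hr' : ‖r‖ ≠ 0 := norm_ne_zero_iff.mpr hr0
  have hG : Real.sqrt (gram2 v r) = ‖v‖ * ‖r‖ := by
    rw [gram2, hvr, ← mul_pow]
    simp only [ne_eq, OfNat.ofNat_ne_zero, not_false_eq_true, zero_pow, sub_zero]
    exact Real.sqrt_sq (by positivity)
  have key : Real.sqrt (gram2 (glCLM g (‖v‖⁻¹ • v)) (glCLM g (‖r‖⁻¹ • r))) ≤ N2 g := by
    apply le_csSup ⟨_, N2_bdd g⟩
    refine ⟨‖v‖⁻¹ • v, ‖r‖⁻¹ • r, ?_, ?_, ?_, rfl⟩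
    · rw [norm_smul, norm_inv, norm_norm, inv_mul_cancel₀ hv']
    · rw [norm_smul, norm_inv, norm_norm, inv_mul_cancel₀ hr']
    · rw [inner_smul_left, inner_smul_right, hvr]; simp
  rw [map_smul, map_smul, sqrt_gram2_smul, abs_inv, abs_inv, abs_norm, abs_norm] at key
  rw [hG]
  calc _ = ‖v‖⁻¹ * ‖r‖⁻¹ * Real.sqrt (gram2 (glCLM g v) (glCLM g r)) * (‖v‖ * ‖r‖) := by
        field_simp
    _ ≤ _ := by gcongr

lemma pdelta_mk (v w : Ed d) (hv : v ≠ 0) (hw : w ≠ 0) :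
    pdelta (Projectivization.mk ℝ v hv) (Projectivization.mk ℝ w hw) =
      Real.sqrt (gram2 v w) / (‖v‖ * ‖w‖) := by
  obtain ⟨a, ha⟩ := Projectivization.exists_smul_eq_mk_rep ℝ v hv
  obtain ⟨b, hb⟩ := Projectivization.exists_smul_eq_mk_rep ℝ w hw
  change Real.sqrt (gram2 _ _) / _ = _
  rw [← ha, ← hb, Units.smul_def, Units.smul_def, sqrt_gram2_smul, norm_smul, norm_smul,
    Real.norm_eq_abs, Real.norm_eq_abs]
  have h1 : |(a : ℝ)| ≠ 0 := abs_ne_zero.mpr a.ne_zero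
  have h2 : |(b : ℝ)| ≠ 0 := abs_ne_zero.mpr b.ne_zero
  have h3 : ‖v‖ ≠ 0 := norm_ne_zero_iff.mpr hv
  have h4 : ‖w‖ ≠ 0 := norm_ne_zero_iff.mpr hw
  field_simp

lemma exists_unit_rep (x : Pd d) :
    ∃ (v : Ed d) (hv : v ≠ 0), ‖v‖ = 1 ∧ x = Projectivization.mk ℝ v hv := by
  have h := x.rep_nonzero
  have hn : ‖x.rep‖ ≠ 0 := norm_ne_zero_iff.mpr h
  refine ⟨‖x.rep‖⁻¹ • x.rep, smul_ne_zero (inv_ne_zero hn) h, ?_, ?_⟩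
  · rw [norm_smul, norm_inv, norm_norm, inv_mul_cancel₀ hn]
  · conv_lhs => rw [← x.mk_rep]
    rw [Projectivization.mk_eq_mk_iff']
    exact ⟨‖x.rep‖, by rw [smul_smul, mul_inv_cancel₀ hn, one_smul]⟩

lemma glCLM_ne_zero (g : GLd d) {v : Ed d} (hv : v ≠ 0) : glCLM g v ≠ 0 := by
  intro h
  apply hv
  rw [← glCLM_leftInv g v, h, map_zero]

lemma ratio_le (g : GLd d) (v w : Ed d) (hv : v ≠ 0) (hw : w ≠ 0) (hv1 : ‖v‖ = 1) (hw1 : ‖w‖ = 1) :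
    pdelta (pact g (Projectivization.mk ℝ v hv)) (pact g (Projectivization.mk ℝ w hw)) /
      pdelta (Projectivization.mk ℝ v hv) (Projectivization.mk ℝ w hw) ≤
      N2 g / (‖glCLM g v‖ * ‖glCLM g w‖) := by
  have e : ∀ (u : Ed d) (hu : u ≠ 0), pact g (Projectivization.mk ℝ u hu) =
      Projectivization.mk ℝ (glCLM g u) (glCLM_ne_zero g hu) := fun u hu => rfl
  rw [e, e, pdelta_mk, pdelta_mk, hv1, hw1, mul_one, div_one]
  have h1 := gram2_map_le g v w
  have hN := N2_nonneg g
  rcases (Real.sqrt_nonneg (gram2 v w)).eq_or_lt with h | h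
  · rw [← h, div_zero]; positivity
  · rw [div_div, mul_comm (_ * _), ← div_div]
    gcongr
    rwa [div_le_iff₀ h]

lemma rpow_amgm {N a b α : ℝ} (hN : 0 ≤ N) (ha : 0 < a) (hb : 0 < b) :
    (N / (a * b)) ^ α ≤ ((N / a ^ 2) ^ α + (N / b ^ 2) ^ α) / 2 := by
  have e : (N / (a * b)) ^ α = ((N / a ^ 2) ^ (α / 2)) * ((N / b ^ 2) ^ (α / 2)) := by
    rw [← Real.mul_rpow (by positivity) (by positivity)]
    have : N / a ^ 2 * (N / b ^ 2) = (N / (a * b)) ^ (2 : ℝ) := by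
      rw [Real.rpow_two]; field_simp
    rw [this, ← Real.rpow_mul (by positivity)]
    congr 1; ring
  have e2 : ∀ x : ℝ, 0 ≤ x → x ^ α = (x ^ (α / 2)) ^ 2 := by
    intro x hx
    rw [← Real.rpow_natCast, ← Real.rpow_mul hx]
    congr 1; push_cast; ring
  rw [e, e2 (N / a ^ 2) (by positivity), e2 (N / b ^ 2) (by positivity)]
  nlinarith [sq_nonneg ((N / a ^ 2) ^ (α / 2) - (N / b ^ 2) ^ (α / 2))]

lemma continuous_glCLM : Continuous (glCLM : GLd d → Ed d →L[ℝ] Ed d) := by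
  have h : Continuous (Matrix.toEuclideanCLM (n := Fin d) (𝕜 := ℝ)) :=
    LinearMap.continuous_of_finiteDimensional
      (Matrix.toEuclideanCLM (n := Fin d) (𝕜 := ℝ)).toAlgEquiv.toLinearMap
  exact h.comp Units.continuous_val

lemma continuous_gnorm : Continuous (gnorm : GLd d → ℝ) := continuous_glCLM.norm

lemma measurable_N2 (hd : 2 ≤ d) : Measurable (N2 : GLd d → ℝ) := by
  apply measurable_of_Ioi
  intro a
  apply IsOpen.measurableSet
  have : N2 ⁻¹' Set.Ioi a = ⋃ (p : Ed d) (q : Ed d) (_ : ‖p‖ = 1 ∧ ‖q‖ = 1 ∧ (inner ℝ p q : ℝ) = 0),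
      {g : GLd d | a < Real.sqrt (gram2 (glCLM g p) (glCLM g q))} := by
    ext g
    simp only [Set.mem_preimage, Set.mem_Ioi, Set.mem_iUnion, Set.mem_ofPred_eq, exists_prop]
    rw [N2, lt_csSup_iff ⟨_, N2_bdd g⟩]
    · constructor
      · rintro ⟨_, ⟨p, q, h1, h2, h3, rfl⟩, h⟩
        exact ⟨p, q, ⟨h1, h2, h3⟩, h⟩
      · rintro ⟨p, q, ⟨h1, h2, h3⟩, h⟩
        exact ⟨_, ⟨p, q, h1, h2, h3, rfl⟩, h⟩
    · refine ⟨_, EuclideanSpace.single ⟨0, by omega⟩ 1, EuclideanSpace.single ⟨1, by omega⟩ 1,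
        by simp, by simp, by simp [EuclideanSpace.inner_single_left], rfl⟩
  rw [this]
  refine isOpen_iUnion fun p => isOpen_iUnion fun q => isOpen_iUnion fun _ => ?_
  apply isOpen_lt continuous_const
  have := continuous_glCLM (d := d)
  unfold gram2
  fun_prop

lemma integrand_bound {C α : ℝ} (hα : 0 < α) (g : GLd d) (h1 : gnorm g ≤ C) (h2 : gnorm g⁻¹ ≤ C)
    (v : Ed d) (hv : ‖v‖ = 1) :
    ‖(N2 g / ‖glCLM g v‖ ^ 2) ^ α‖ ≤ (C ^ 2 * C ^ 2) ^ α := by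
  have hN := N2_nonneg g
  have hv0 : v ≠ 0 := by rintro rfl; simp at hv
  have hg : 0 < ‖glCLM g v‖ := norm_pos_iff.mpr (glCLM_ne_zero g hv0)
  have h0 : 0 ≤ gnorm g := norm_nonneg _
  have h3 : 1 ≤ C * ‖glCLM g v‖ := by
    calc 1 = ‖glCLM g⁻¹ (glCLM g v)‖ := by rw [glCLM_leftInv, hv]
      _ ≤ gnorm g⁻¹ * ‖glCLM g v‖ := (glCLM g⁻¹).le_opNorm _
      _ ≤ _ := by gcongr
  rw [Real.norm_of_nonneg (by positivity)]
  apply Real.rpow_le_rpow (by positivity) _ hα.le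
  rw [div_le_iff₀ (by positivity)]
  calc N2 g ≤ C ^ 2 * 1 := by
        rw [mul_one]; exact (N2_le g).trans (by gcongr)
    _ ≤ C ^ 2 * (C * ‖glCLM g v‖) ^ 2 := by gcongr; exact one_le_pow₀ h3
    _ = _ := by ring

theorem kalpha_le_sup_integral
    (d : ℕ) (hd : 2 ≤ d) (μ : Measure (GLd d)) [IsFiniteMeasure μ]
    (hc : CompactlySupported μ) (α : ℝ) (hα : 0 < α) :
    kalpha α μ ≤
      sSup { x : ℝ | ∃ v : Ed d, ‖v‖ = 1 ∧
        x = ∫ g, (N2 g / ‖glCLM g v‖ ^ 2) ^ α ∂μ } := by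
  obtain ⟨K, hK, hKμ⟩ := hc
  obtain ⟨C1, hC1⟩ := hK.bddAbove_image (continuous_gnorm (d := d)).continuousOn
  obtain ⟨C2, hC2⟩ := hK.bddAbove_image
    ((continuous_gnorm (d := d)).comp continuous_inv).continuousOn
  set C := max C1 C2
  have hae : ∀ᵐ g ∂μ, ∀ v : Ed d, ‖v‖ = 1 →
      ‖(N2 g / ‖glCLM g v‖ ^ 2) ^ α‖ ≤ (C ^ 2 * C ^ 2) ^ α := by
    have : ∀ᵐ g ∂μ, g ∈ K := by rw [ae_iff]; exact hKμ
    filter_upwards [this] with g hg v hv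
    exact integrand_bound hα g ((hC1 ⟨g, hg, rfl⟩).trans (le_max_left _ _))
      ((hC2 ⟨g, hg, rfl⟩).trans (le_max_right _ _)) v hv
  have hIntegrable : ∀ v : Ed d, ‖v‖ = 1 → Integrable (fun g => (N2 g / ‖glCLM g v‖ ^ 2) ^ α) μ := by
    intro v hv
    refine Integrable.of_bound (C := (C ^ 2 * C ^ 2) ^ α) ?_ ?_
    · have hm : Measurable (fun g : GLd d => ‖glCLM g v‖ ^ 2) := by
        have := continuous_glCLM (d := d)
        exact Continuous.measurable (by fun_prop)
      exact (((measurable_N2 hd).div hm).pow_const α).aestronglyMeasurable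
    · filter_upwards [hae] with g hg using hg v hv
  set S := { x : ℝ | ∃ v : Ed d, ‖v‖ = 1 ∧ x = ∫ g, (N2 g / ‖glCLM g v‖ ^ 2) ^ α ∂μ } with hS
  have hbdd : BddAbove S := by
    refine ⟨(C ^ 2 * C ^ 2) ^ α * μ.real Set.univ, ?_⟩
    rintro x ⟨v, hv, rfl⟩
    refine (Real.le_norm_self _).trans (norm_integral_le_of_norm_le_const ?_)
    filter_upwards [hae] with g hg using hg v hv
  have hle : ∀ v : Ed d, ‖v‖ = 1 → ∫ g, (N2 g / ‖glCLM g v‖ ^ 2) ^ α ∂μ ≤ sSup S :=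
    fun v hv => le_csSup hbdd ⟨v, hv, rfl⟩
  have hpd : ∀ x y : Pd d, 0 ≤ pdelta x y := fun x y => by unfold pdelta; positivity
  apply Real.sSup_le
  · rintro x ⟨v₁, v₂, -, rfl⟩
    obtain ⟨v, hv, hv1, rfl⟩ := exists_unit_rep v₁
    obtain ⟨w, hw, hw1, rfl⟩ := exists_unit_rep v₂
    have hmono := integral_mono_of_nonneg (μ := μ)
      (f := fun g => (pdelta (pact g (Projectivization.mk ℝ v hv))
        (pact g (Projectivization.mk ℝ w hw)) /
        pdelta (Projectivization.mk ℝ v hv) (Projectivization.mk ℝ w hw)) ^ α)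
      (g := fun g => ((N2 g / ‖glCLM g v‖ ^ 2) ^ α + (N2 g / ‖glCLM g w‖ ^ 2) ^ α) / 2)
      (Eventually.of_forall fun g => Real.rpow_nonneg (div_nonneg (hpd _ _) (hpd _ _)) _)
      (((hIntegrable v hv1).add (hIntegrable w hw1)).div_const 2)
      (Eventually.of_forall fun g =>
        (Real.rpow_le_rpow (div_nonneg (hpd _ _) (hpd _ _)) (ratio_le g v w hv hw hv1 hw1)
          hα.le).trans (rpow_amgm (N2_nonneg g) (norm_pos_iff.mpr (glCLM_ne_zero g hv))
            (norm_pos_iff.mpr (glCLM_ne_zero g hw))))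
    rw [integral_div, integral_add (hIntegrable v hv1) (hIntegrable w hw1)] at hmono
    linarith [hle v hv1, hle w hw1]
  · apply Real.sSup_nonneg
    rintro x ⟨v, -, rfl⟩
    exact integral_nonneg fun g => Real.rpow_nonneg (div_nonneg (N2_nonneg g) (sq_nonneg _)) _

end
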